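/- arXiv:2201.00446 — 6 statements merged into one kernel-verified Lean document; each statement's English description precedes it below -/
import Mathlib

section
/- Let d ≥ 1 and let f, g : ℝ^d → ℝ be continuously differentiable, where f has L-Lipschitz gradient and satisfies the PL inequality with constant μ > 0, with f* = inf f and g* = inf g both finite. Suppose |g(x) − f(x)| ≤ η₀ for all x ∈ ℝ^d and |f* − g*| ≤ η*. Fix α ∈ (0, 1/L], x ∈ ℝ^d, ε ∈ ℝ^d, and set x⁺ = x − α(∇f(x) + ε). Then g(x⁺) − g* ≤ (1 − αμ)(f(x) − f*) + (α/2)‖ε‖² + η* + η₀. -/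
open scoped RealInnerProductSpace

/-!
A function with `L`-Lipschitz gradient lies below its linearisation at `x` plus
`(L / 2) ‖y - x‖²`. For a step `-α v` with `α L ≤ 1` this gives
`f (x - α v) ≤ f x - α ⟪∇f x, v⟫ + (α / 2) ‖v‖²`, and completing the square turns the right-hand
side into `f x - (α / 2) ‖∇f x‖² + (α / 2) ‖v - ∇f x‖²`: the gradient error enters only
quadratically, with no cross term. The Polyak–Łojasiewicz inequality then trades `‖∇f x‖²` for the
suboptimality of `f`, and passing from `f` to `g` costs `η₀` at the new point and `ηs` in the
infima.
-/

section QuadraticBound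

variable {F : Type*} [NormedAddCommGroup F] [NormedSpace ℝ F]

theorem norm_image_sub_le_of_norm_deriv_le_mul_sub {φ φ' : ℝ → F} {a b C : ℝ}
    (hφ : ∀ t ∈ Set.Icc a b, HasDerivWithinAt φ (φ' t) (Set.Icc a b) t)
    (hC : ∀ t ∈ Set.Ico a b, ‖φ' t‖ ≤ C * (t - a)) :
    ∀ t ∈ Set.Icc a b, ‖φ t - φ a‖ ≤ C / 2 * (t - a) ^ 2 := by
  have hB (t : ℝ) : HasDerivAt (fun t ↦ C / 2 * (t - a) ^ 2) (C * (t - a)) t := by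
    convert! (((hasDerivAt_id t).sub_const a).pow 2).const_mul (C / 2) using 1
    simp only [id]
    ring
  have hφ_sub (t : ℝ) (ht : t ∈ Set.Icc a b) :
      HasDerivWithinAt (fun t ↦ φ t - φ a) (φ' t) (Set.Icc a b) t :=
    (hφ t ht).sub_const (φ a)
  exact image_norm_le_of_norm_deriv_right_le_deriv_boundary
    (fun t ht ↦ (hφ_sub t ht).continuousWithinAt)
    (fun t ht ↦ (hφ_sub t (Set.Ico_subset_Icc_self ht)).mono_of_mem_nhdsWithin
      (Icc_mem_nhdsGE_of_mem ht))
    (by simp) hB hC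

theorem norm_image_sub_sub_le_of_norm_hasFDerivWithinAt_sub_le {E : Type*} [NormedAddCommGroup E]
    [NormedSpace ℝ E] {f : E → F} {f' : E → E →L[ℝ] F} {s : Set E} {x y : E} {L : ℝ}
    (hs : Convex ℝ s) (hf : ∀ z ∈ s, HasFDerivWithinAt f (f' z) s z)
    (hL : ∀ z ∈ s, ‖f' z - f' x‖ ≤ L * ‖z - x‖) (hx : x ∈ s) (hy : y ∈ s) :
    ‖f y - f x - f' x (y - x)‖ ≤ L / 2 * ‖y - x‖ ^ 2 := by
  let γ : ℝ → E := AffineMap.lineMap x y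
  have hγ : Set.MapsTo γ (Set.Icc 0 1) s := hs.mapsTo_lineMap hx hy
  let φ : ℝ → F := fun t ↦ f (γ t) - t • f' x (y - x)
  have hφ (t : ℝ) (ht : t ∈ Set.Icc 0 1) :
      HasDerivWithinAt φ ((f' (γ t) - f' x) (y - x)) (Set.Icc 0 1) t := by
    have hfγ : HasDerivWithinAt (f ∘ γ) (f' (γ t) (y - x)) (Set.Icc 0 1) t :=
      (hf _ (hγ ht)).comp_hasDerivWithinAt t AffineMap.hasDerivWithinAt_lineMap hγ
    convert! hfγ.sub ((hasDerivWithinAt_id t _).smul_const (f' x (y - x))) using 1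
    rw [one_smul, sub_apply]
  have hφ' (t : ℝ) (ht : t ∈ Set.Ico 0 1) :
      ‖(f' (γ t) - f' x) (y - x)‖ ≤ L * ‖y - x‖ ^ 2 * (t - 0) := by
    have hγx : ‖γ t - x‖ = t * ‖y - x‖ := by
      rw [← dist_eq_norm, dist_lineMap_left, Real.norm_of_nonneg ht.1, dist_eq_norm_sub']
    calc ‖(f' (γ t) - f' x) (y - x)‖
        ≤ L * ‖γ t - x‖ * ‖y - x‖ :=
          ContinuousLinearMap.le_of_opNorm_le _ (hL _ (hγ (Set.Ico_subset_Icc_self ht))) _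
      _ = L * ‖y - x‖ ^ 2 * (t - 0) := by
          rw [hγx]
          ring
  calc ‖f y - f x - f' x (y - x)‖ = ‖φ 1 - φ 0‖ := by simp [φ, γ, sub_right_comm]
    _ ≤ L * ‖y - x‖ ^ 2 / 2 * (1 - 0) ^ 2 :=
      norm_image_sub_le_of_norm_deriv_le_mul_sub hφ hφ' 1 (Set.right_mem_Icc.2 zero_le_one)
    _ = L / 2 * ‖y - x‖ ^ 2 := by ring

end QuadraticBound

section GradientStep

variable {E : Type*} [NormedAddCommGroup E] [InnerProductSpace ℝ E] [CompleteSpace E]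
  {f : E → ℝ} {x : E} {L α : ℝ}

theorem le_add_inner_gradient_add_sq (hf : Differentiable ℝ f)
    (hL : ∀ y, ‖gradient f y - gradient f x‖ ≤ L * ‖y - x‖) (y : E) :
    f y ≤ f x + ⟪gradient f x, y - x⟫ + L / 2 * ‖y - x‖ ^ 2 := by
  have hL' (z : E) : ‖fderiv ℝ f z - fderiv ℝ f x‖ ≤ L * ‖z - x‖ := by
    simpa only [← toDual_gradient, ← map_sub, LinearIsometryEquiv.norm_map] using hL z
  have hxy : ‖f y - f x - fderiv ℝ f x (y - x)‖ ≤ L / 2 * ‖y - x‖ ^ 2 :=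
    norm_image_sub_sub_le_of_norm_hasFDerivWithinAt_sub_le convex_univ
      (fun z _ ↦ (hf z).hasFDerivAt.hasFDerivWithinAt) (fun z _ ↦ hL' z)
      (Set.mem_univ x) (Set.mem_univ y)
  rw [inner_gradient_left]
  linarith [Real.le_norm_self (f y - f x - fderiv ℝ f x (y - x))]

theorem image_sub_smul_gradient_add_le (hf : Differentiable ℝ f)
    (hL : ∀ y, ‖gradient f y - gradient f x‖ ≤ L * ‖y - x‖) (hα : 0 ≤ α) (hαL : α * L ≤ 1)
    (ε : E) :
    f (x - α • (gradient f x + ε)) ≤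
      f x - α / 2 * ‖gradient f x‖ ^ 2 + α / 2 * ‖ε‖ ^ 2 := by
  set v := gradient f x + ε with hv
  have hstep : x - α • v - x = -(α • v) := by abel
  have hε : ‖ε‖ ^ 2 = ‖v‖ ^ 2 - 2 * ⟪gradient f x, v⟫ + ‖gradient f x‖ ^ 2 := by
    rw [real_inner_comm, ← norm_sub_sq_real, hv, add_sub_cancel_left]
  calc f (x - α • v)
      ≤ f x + ⟪gradient f x, -(α • v)⟫ + L / 2 * ‖-(α • v)‖ ^ 2 :=
        hstep ▸ le_add_inner_gradient_add_sq hf hL (x - α • v)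
    _ = f x - α * ⟪gradient f x, v⟫ + α * L * (α / 2 * ‖v‖ ^ 2) := by
        rw [inner_neg_right, real_inner_smul_right, norm_neg, norm_smul, Real.norm_of_nonneg hα]
        ring
    _ ≤ f x - α * ⟪gradient f x, v⟫ + α / 2 * ‖v‖ ^ 2 := by
        have hv_nonneg : 0 ≤ α / 2 * ‖v‖ ^ 2 := by positivity
        exact add_le_add_right (mul_le_of_le_one_left hv_nonneg hαL) _
    _ = f x - α / 2 * ‖gradient f x‖ ^ 2 + α / 2 * ‖ε‖ ^ 2 := by
        rw [hε]
        ring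

theorem image_sub_smul_gradient_add_sub_le_of_pl {μ c : ℝ} (hf : Differentiable ℝ f)
    (hL : ∀ y, ‖gradient f y - gradient f x‖ ≤ L * ‖y - x‖)
    (hPL : μ * (f x - c) ≤ 1 / 2 * ‖gradient f x‖ ^ 2) (hα : 0 ≤ α) (hαL : α * L ≤ 1) (ε : E) :
    f (x - α • (gradient f x + ε)) - c ≤ (1 - α * μ) * (f x - c) + α / 2 * ‖ε‖ ^ 2 := by
  have hdescent := image_sub_smul_gradient_add_le hf hL hα hαL ε
  have hαPL : α * (μ * (f x - c)) ≤ α * (1 / 2 * ‖gradient f x‖ ^ 2) :=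
    mul_le_mul_of_nonneg_left hPL hα
  linarith

end GradientStep

theorem stmt1_general {E : Type*} [NormedAddCommGroup E] [InnerProductSpace ℝ E] [CompleteSpace E]
    {f g : E → ℝ} {fstar gstar L μ η₀ ηs α : ℝ} {x ε : E} (hf : Differentiable ℝ f)
    (hL : ∀ y, ‖gradient f y - gradient f x‖ ≤ L * ‖y - x‖)
    (_hfstar : IsGLB (Set.range f) fstar) (_hgstar : IsGLB (Set.range g) gstar)
    (hPL : μ * (f x - fstar) ≤ 1 / 2 * ‖gradient f x‖ ^ 2)
    (hdrift : |g (x - α • (gradient f x + ε)) - f (x - α • (gradient f x + ε))| ≤ η₀)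
    (hdrifts : |fstar - gstar| ≤ ηs) (hα : 0 ≤ α) (hαL : α * L ≤ 1) :
    g (x - α • (gradient f x + ε)) - gstar ≤
      (1 - α * μ) * (f x - fstar) + α / 2 * ‖ε‖ ^ 2 + ηs + η₀ := by
  have hstep := image_sub_smul_gradient_add_sub_le_of_pl hf hL hPL hα hαL ε
  linarith [le_of_abs_le hdrift, le_of_abs_le hdrifts]

/-- single-step suboptimality recursion for inexact gradient
descent on a drifting PL objective. -/
theorem stmt1 (d : ℕ) (hd : 1 ≤ d)
    (f g : EuclideanSpace ℝ (Fin d) → ℝ) (fstar gstar L μ η₀ ηs α : ℝ)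
    (hL : 0 < L) (hμ : 0 < μ)
    (hf : ContDiff ℝ 1 f) (hg : ContDiff ℝ 1 g)
    (hLip : ∀ x y, ‖gradient f x - gradient f y‖ ≤ L * ‖x - y‖)
    (hfstar : IsGLB (Set.range f) fstar)
    (hgstar : IsGLB (Set.range g) gstar)
    (hPL : ∀ x, μ * (f x - fstar) ≤ (1/2) * ‖gradient f x‖^2)
    (hdrift : ∀ x, |g x - f x| ≤ η₀)
    (hdrifts : |fstar - gstar| ≤ ηs)
    (hα : 0 < α) (hα' : α ≤ 1/L)
    (x ε : EuclideanSpace ℝ (Fin d)) :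
    g (x - α • (gradient f x + ε)) - gstar ≤
      (1 - α*μ) * (f x - fstar) + (α/2) * ‖ε‖^2 + ηs + η₀ :=
  stmt1_general (hf.differentiable one_ne_zero) (fun y ↦ hLip y x) hfstar hgstar (hPL x)
    (hdrift _) hdrifts hα.le ((le_div_iff₀ hL).1 hα')
end

section
/- Let d ≥ 1 and let f : ℝ^d → ℝ be continuously differentiable with L-Lipschitz gradient, satisfying the PL inequality with constant μ > 0, and suppose the minimiser set X* = argmin f is nonempty with minimum value f*. Then for every x ∈ ℝ^d, (μ/2)·d(x, X*)² ≤ f(x) − f* ≤ (L/2)·d(x, X*)². -/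
open scoped RealInnerProductSpace

/-!
Upper bound: the derivative vanishes at a minimiser `p`, so the quadratic upper bound at `p` gives
`f x - f* ≤ L / 2 * dist x p ^ 2`.

Lower bound: where `f > f*`, the PL inequality says that `g = √(f - f*)` has slope at least
`√(μ / 2)`. For `c < √(μ / 2)`, Ekeland's variational principle started at `x` yields a point `z`
with `c * dist z x ≤ g x - g z` at which the slope of `g` is at most `c`. Such a `z` can only be a
minimiser, and `g z = 0` turns the estimate into `c * dist z x ≤ g x`.
-/

open Filter Set Metric Bornology
open scoped Topology NNReal

section Ekeland

variable {X : Type*} [MetricSpace X] {g : X → ℝ} {b c : ℝ} {x y z : X}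

/-- The lower section of `x` in Ekeland's partial order, in which `y` lies below `x` when moving
from `x` to `y` decreases `g` by at least `c` times the distance travelled. -/
def ekelandSlice (g : X → ℝ) (c : ℝ) (x : X) : Set X :=
  {y | g y + c * dist y x ≤ g x}

lemma mem_ekelandSlice : y ∈ ekelandSlice g c x ↔ g y + c * dist y x ≤ g x :=
  Iff.rfl

lemma self_mem_ekelandSlice : x ∈ ekelandSlice g c x := by
  simp [mem_ekelandSlice]

lemma ekelandSlice_subset (hc : 0 ≤ c) (hy : y ∈ ekelandSlice g c x) :
    ekelandSlice g c y ⊆ ekelandSlice g c x := by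
  intro z hz
  rw [mem_ekelandSlice] at hy hz ⊢
  have htri := mul_le_mul_of_nonneg_left (dist_triangle z y x) hc
  linarith

lemma isClosed_ekelandSlice (hg : LowerSemicontinuous g) : IsClosed (ekelandSlice g c x) := by
  have hdist : Continuous fun y ↦ c * dist y x := by fun_prop
  exact (hg.add hdist.lowerSemicontinuous).isClosed_preimage (g x)

lemma exists_ekelandSlice_subset_closedBall (hb : ∀ y, b ≤ g y) (hc : 0 < c) (x : X) {ε : ℝ}
    (hε : 0 < ε) :
    ∃ y ∈ ekelandSlice g c x, ekelandSlice g c y ⊆ closedBall y ε := by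
  have hbdd : BddBelow (g '' ekelandSlice g c x) := ⟨b, forall_mem_image.2 fun y _ ↦ hb y⟩
  obtain ⟨_, ⟨y, hy, rfl⟩, hlt⟩ :=
    Real.lt_sInf_add_pos ((Set.nonempty_of_mem self_mem_ekelandSlice).image g) (mul_pos hc hε)
  refine ⟨y, hy, fun z hz ↦ mem_closedBall.2 (le_of_mul_le_mul_left ?_ hc)⟩
  have hinf : sInf (g '' ekelandSlice g c x) ≤ g z :=
    csInf_le hbdd (mem_image_of_mem g (ekelandSlice_subset hc.le hy hz))
  have hdecr := mem_ekelandSlice.1 hz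
  linarith

theorem ekeland_variational_principle [CompleteSpace X] (hg : LowerSemicontinuous g)
    (hb : ∀ y, b ≤ g y) (hc : 0 < c) (x : X) :
    ∃ z, g z + c * dist z x ≤ g x ∧ ∀ y ≠ z, g z < g y + c * dist y z := by
  choose next next_mem next_subset using fun (y : X) (n : ℕ) ↦
    exists_ekelandSlice_subset_closedBall hb hc y (Nat.one_div_pos_of_nat (α := ℝ) (n := n))
  let u : ℕ → X := fun n ↦ Nat.rec x (fun n y ↦ next y n) n
  let s : ℕ → Set X := fun n ↦ ekelandSlice g c (u (n + 1))
  have hs_ball (n : ℕ) : s n ⊆ closedBall (u (n + 1)) (1 / (n + 1)) := next_subset (u n) n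
  have hs_bdd (n : ℕ) : IsBounded (s n) := isBounded_closedBall.subset (hs_ball n)
  have hs_anti : Antitone s :=
    antitone_nat_of_succ_le fun n ↦ ekelandSlice_subset hc.le (next_mem (u (n + 1)) (n + 1))
  have hs_diam : Tendsto (fun n ↦ diam (s n)) atTop (𝓝 0) := by
    refine squeeze_zero (fun _ ↦ diam_nonneg)
      (fun n ↦ diam_le_of_subset_closedBall Nat.one_div_pos_of_nat.le (hs_ball n)) ?_
    simpa using (tendsto_one_div_add_atTop_nhds_zero_nat (𝕜 := ℝ)).const_mul 2
  obtain ⟨z, hz⟩ : (⋂ n, s n).Nonempty :=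
    nonempty_iInter_of_nonempty_biInter (fun _ ↦ isClosed_ekelandSlice hg) hs_bdd
      (fun N ↦ ⟨u (N + 1), mem_iInter₂.2 fun _ hn ↦ hs_anti hn self_mem_ekelandSlice⟩) hs_diam
  rw [mem_iInter] at hz
  refine ⟨z, ekelandSlice_subset hc.le (next_mem x 0) (hz 0), fun y hyz ↦ ?_⟩
  by_contra! hy
  have hdist (n : ℕ) : dist y z ≤ diam (s n) :=
    dist_le_diam_of_mem (hs_bdd n) (ekelandSlice_subset hc.le (hz n) hy) (hz n)
  exact hyz (dist_le_zero.1 (ge_of_tendsto' hs_diam hdist))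

end Ekeland

section Derivative

variable {E F : Type*} [NormedAddCommGroup E] [NormedSpace ℝ E] [NormedAddCommGroup F]
  [NormedSpace ℝ F]

lemma norm_le_of_hasFDerivAt_of_eventually_le_add {g : E → ℝ} {g' : E →L[ℝ] ℝ} {c : ℝ} {z : E}
    (hg : HasFDerivAt g g' z) (hc : 0 ≤ c) (h : ∀ᶠ y in 𝓝 z, g z ≤ g y + c * dist y z) :
    ‖g'‖ ≤ c := by
  have hlower (v : E) : -(c * ‖v‖) ≤ g' v := by
    refine ge_of_tendsto (hg.hasLineDerivAt v).tendsto_slope_zero_right ?_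
    have hline : Tendsto (fun t : ℝ ↦ z + t • v) (𝓝[>] 0) (𝓝 z) :=
      tendsto_nhdsWithin_of_tendsto_nhds (Continuous.tendsto' (by fun_prop) 0 z (by simp))
    filter_upwards [hline.eventually h, self_mem_nhdsWithin] with t ht (ht0 : 0 < t)
    rw [dist_self_add_left, norm_smul, Real.norm_of_nonneg ht0.le] at ht
    rw [smul_eq_mul, le_inv_mul_iff₀ ht0]
    linarith
  refine g'.opNorm_le_bound hc fun v ↦ abs_le.2 ⟨hlower v, ?_⟩
  simpa using neg_le_neg (hlower (-v))

lemma norm_fderiv_le_of_eventually_sqrt_le_add {φ : E → ℝ} {c : ℝ} {z : E}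
    (hφ : DifferentiableAt ℝ φ z) (hz : 0 < φ z) (hc : 0 ≤ c)
    (h : ∀ᶠ y in 𝓝 z, √(φ z) ≤ √(φ y) + c * dist y z) :
    ‖fderiv ℝ φ z‖ ≤ 2 * c * √(φ z) := by
  have hsqrt : 0 < √(φ z) := Real.sqrt_pos.2 hz
  have hnorm := norm_le_of_hasFDerivAt_of_eventually_le_add (hφ.hasFDerivAt.sqrt hz.ne') hc h
  rw [norm_smul, Real.norm_of_nonneg (by positivity), one_div,
    inv_mul_le_iff₀ (mul_pos two_pos hsqrt)] at hnorm
  linarith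

lemma norm_image_sub_sub_fderiv_le {f : E → F} {L : ℝ} {x : E} (hf : Differentiable ℝ f)
    (hL : ∀ y, ‖fderiv ℝ f y - fderiv ℝ f x‖ ≤ L * ‖y - x‖) (y : E) :
    ‖f y - f x - fderiv ℝ f x (y - x)‖ ≤ L / 2 * ‖y - x‖ ^ 2 := by
  set v := y - x with hv
  let remainder : ℝ → F := fun t ↦ f (x + t • v) - f x - t • fderiv ℝ f x v
  have hremainder (t : ℝ) :
      HasDerivAt remainder (fderiv ℝ f (x + t • v) v - fderiv ℝ f x v) t := by
    have hline : HasDerivAt (fun t : ℝ ↦ x + t • v) v t := by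
      simpa using ((hasDerivAt_id t).smul_const v).const_add x
    have hlinear : HasDerivAt (fun t : ℝ ↦ t • fderiv ℝ f x v) (fderiv ℝ f x v) t := by
      simpa using (hasDerivAt_id t).smul_const (fderiv ℝ f x v)
    exact (((hf _).hasFDerivAt.comp_hasDerivAt t hline).sub_const (f x)).sub hlinear
  have hmajorant (t : ℝ) :
      HasDerivAt (fun t : ℝ ↦ L / 2 * ‖v‖ ^ 2 * t ^ 2) (L * ‖v‖ ^ 2 * t) t :=
    ((hasDerivAt_pow 2 t).const_mul (L / 2 * ‖v‖ ^ 2)).congr_deriv (by push_cast; ring)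
  have hderiv (t : ℝ) (ht : t ∈ Ico (0 : ℝ) 1) :
      ‖fderiv ℝ f (x + t • v) v - fderiv ℝ f x v‖ ≤ L * ‖v‖ ^ 2 * t :=
    calc ‖fderiv ℝ f (x + t • v) v - fderiv ℝ f x v‖
        ≤ ‖fderiv ℝ f (x + t • v) - fderiv ℝ f x‖ * ‖v‖ :=
          (fderiv ℝ f (x + t • v) - fderiv ℝ f x).le_opNorm v
      _ ≤ L * ‖x + t • v - x‖ * ‖v‖ := by gcongr; exact hL _
      _ = L * ‖v‖ ^ 2 * t := by
          rw [add_sub_cancel_left, norm_smul, Real.norm_of_nonneg ht.1]; ring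
  have hbound := image_norm_le_of_norm_deriv_right_le_deriv_boundary
    (fun t _ ↦ (hremainder t).continuousAt.continuousWithinAt)
    (fun t _ ↦ (hremainder t).hasDerivWithinAt) (by simp [remainder]) hmajorant hderiv
    (right_mem_Icc.2 zero_le_one)
  simpa [remainder, hv] using hbound

lemma sub_le_sq_infDist_of_lipschitzWith_fderiv {f : E → ℝ} {m : ℝ} {L : ℝ≥0}
    (hf : Differentiable ℝ f) (hL : LipschitzWith L (fderiv ℝ f)) (hm : ∀ x, m ≤ f x)
    (hne : {y | f y = m}.Nonempty) (x : E) :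
    f x - m ≤ L / 2 * infDist x {y | f y = m} ^ 2 := by
  have hminimiser (p : E) (hp : f p = m) : f x - m ≤ L / 2 * dist x p ^ 2 := by
    have hmin : IsLocalMin f p := .of_forall fun y ↦ hp.trans_le (hm y)
    have hquad := norm_image_sub_sub_fderiv_le hf (fun y ↦ hL.norm_sub_le y p) x
    rw [hmin.fderiv_eq_zero, zero_apply, sub_zero, hp, ← dist_eq_norm x p] at hquad
    exact (Real.le_norm_self _).trans hquad
  have hlim : Tendsto (fun r : ℝ ↦ L / 2 * r ^ 2) (𝓝[>] infDist x {y | f y = m})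
      (𝓝 (L / 2 * infDist x {y | f y = m} ^ 2)) :=
    tendsto_nhdsWithin_of_tendsto_nhds (Continuous.tendsto (by fun_prop) _)
  refine ge_of_tendsto hlim ?_
  filter_upwards [self_mem_nhdsWithin] with r hr
  obtain ⟨p, hp, hpr⟩ := (infDist_lt_iff hne).1 hr
  exact (hminimiser p hp).trans (by gcongr)

end Derivative

section PolyakLojasiewicz

variable {E : Type*} [NormedAddCommGroup E] [NormedSpace ℝ E] {f : E → ℝ} {m μ : ℝ}

/-- The Polyak–Łojasiewicz inequality with constant `μ` relative to the level `m`, which stands for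
the infimum of `f`. The norm of the derivative replaces that of the gradient, so that no inner
product is needed. -/
def PolyakLojasiewicz (f : E → ℝ) (m μ : ℝ) : Prop :=
  ∀ x, μ * (f x - m) ≤ 1 / 2 * ‖fderiv ℝ f x‖ ^ 2

namespace PolyakLojasiewicz

lemma eq_of_eventually_sqrt_le_add (hPL : PolyakLojasiewicz f m μ) {c : ℝ} {z : E}
    (hf : DifferentiableAt ℝ f z) (hz : m ≤ f z) (hc : 0 ≤ c) (hcμ : 2 * c ^ 2 < μ)
    (h : ∀ᶠ y in 𝓝 z, √(f z - m) ≤ √(f y - m) + c * dist y z) :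
    f z = m := by
  by_contra hne
  have hpos : 0 < f z - m := sub_pos.2 (lt_of_le_of_ne hz (Ne.symm hne))
  have hslope : ‖fderiv ℝ f z‖ ≤ 2 * c * √(f z - m) := by
    simpa only [fderiv_sub_const] using
      norm_fderiv_le_of_eventually_sqrt_le_add (hf.sub_const m) hpos hc h
  have hle : μ * (f z - m) ≤ 2 * c ^ 2 * (f z - m) :=
    calc μ * (f z - m) ≤ 1 / 2 * ‖fderiv ℝ f z‖ ^ 2 := hPL z
      _ ≤ 1 / 2 * (2 * c * √(f z - m)) ^ 2 := by gcongr
      _ = 2 * c ^ 2 * (f z - m) := by rw [mul_pow, Real.sq_sqrt hpos.le]; ring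
  exact hcμ.not_ge (le_of_mul_le_mul_right hle hpos)

variable [CompleteSpace E]

lemma exists_eq_and_sq_dist_le (hPL : PolyakLojasiewicz f m μ) (hf : Differentiable ℝ f)
    (hm : ∀ x, m ≤ f x) {ν : ℝ} (hν : 0 < ν) (hνμ : ν < μ) (x : E) :
    ∃ z, f z = m ∧ ν / 2 * dist x z ^ 2 ≤ f x - m := by
  have hcont : Continuous fun y ↦ √(f y - m) := (hf.continuous.sub continuous_const).sqrt
  have hc : 0 < √(ν / 2) := Real.sqrt_pos.2 (half_pos hν)
  have hc_sq : √(ν / 2) ^ 2 = ν / 2 := Real.sq_sqrt (half_pos hν).le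
  obtain ⟨z, hzx, hz⟩ := ekeland_variational_principle hcont.lowerSemicontinuous
    (fun _ ↦ Real.sqrt_nonneg _) hc x
  have hfz : f z = m := by
    refine hPL.eq_of_eventually_sqrt_le_add (hf z) (hm z) hc.le (by linarith)
      (.of_forall fun y ↦ ?_)
    obtain rfl | hyz := eq_or_ne y z
    · simp
    · exact (hz y hyz).le
  refine ⟨z, hfz, ?_⟩
  rw [hfz, sub_self, Real.sqrt_zero, zero_add, dist_comm] at hzx
  calc ν / 2 * dist x z ^ 2 = (√(ν / 2) * dist x z) ^ 2 := by rw [mul_pow, hc_sq]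
    _ ≤ √(f x - m) ^ 2 := by gcongr
    _ = f x - m := Real.sq_sqrt (sub_nonneg.2 (hm x))

lemma nonempty_setOf_eq (hPL : PolyakLojasiewicz f m μ) (hμ : 0 < μ) (hf : Differentiable ℝ f)
    (hm : ∀ x, m ≤ f x) : {y | f y = m}.Nonempty := by
  obtain ⟨z, hz, -⟩ := hPL.exists_eq_and_sq_dist_le hf hm (half_pos hμ) (half_lt_self hμ) 0
  exact ⟨z, hz⟩

lemma sq_infDist_le (hPL : PolyakLojasiewicz f m μ) (hμ : 0 < μ) (hf : Differentiable ℝ f)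
    (hm : ∀ x, m ≤ f x) (x : E) : μ / 2 * infDist x {y | f y = m} ^ 2 ≤ f x - m := by
  have hlim : Tendsto (fun ν : ℝ ↦ ν / 2 * infDist x {y | f y = m} ^ 2) (𝓝[<] μ)
      (𝓝 (μ / 2 * infDist x {y | f y = m} ^ 2)) :=
    tendsto_nhdsWithin_of_tendsto_nhds (Continuous.tendsto (by fun_prop) _)
  refine le_of_tendsto hlim ?_
  filter_upwards [Ioo_mem_nhdsLT hμ] with ν ⟨hν, hνμ⟩
  obtain ⟨z, hz, hzx⟩ := hPL.exists_eq_and_sq_dist_le hf hm hν hνμ x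
  have hdist : infDist x {y | f y = m} ≤ dist x z := infDist_le_dist_of_mem hz
  have hnonneg : 0 ≤ infDist x {y | f y = m} := infDist_nonneg
  exact le_trans (by gcongr) hzx

end PolyakLojasiewicz

theorem stmt3_general [CompleteSpace E] {L : ℝ≥0} (hμ : 0 < μ) (hf : Differentiable ℝ f)
    (hL : LipschitzWith L (fderiv ℝ f)) (hm : ∀ x, m ≤ f x) (hPL : PolyakLojasiewicz f m μ) :
    {y | f y = m}.Nonempty ∧ ∀ x,
      μ / 2 * infDist x {y | f y = m} ^ 2 ≤ f x - m ∧
        f x - m ≤ L / 2 * infDist x {y | f y = m} ^ 2 := by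
  have hne := hPL.nonempty_setOf_eq hμ hf hm
  exact ⟨hne, fun x ↦ ⟨hPL.sq_infDist_le hμ hf hm x,
    sub_le_sq_infDist_of_lipschitzWith_fderiv hf hL hm hne x⟩⟩

end PolyakLojasiewicz

section Gradient

variable {𝕜 H : Type*} [RCLike 𝕜] [NormedAddCommGroup H] [InnerProductSpace 𝕜 H] [CompleteSpace H]
  {f : H → 𝕜}

lemma norm_gradient (x : H) : ‖gradient f x‖ = ‖fderiv 𝕜 f x‖ :=
  (InnerProductSpace.toDual 𝕜 H).symm.norm_map _

lemma dist_gradient_gradient (x y : H) :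
    dist (gradient f x) (gradient f y) = dist (fderiv 𝕜 f x) (fderiv 𝕜 f y) :=
  (InnerProductSpace.toDual 𝕜 H).symm.dist_map _ _

end Gradient

/-- quadratic squeeze between the suboptimality gap and the
squared distance to the minimiser set, for a PL function with Lipschitz
gradient. -/
theorem stmt3 (d : ℕ) (hd : 1 ≤ d)
    (f : EuclideanSpace ℝ (Fin d) → ℝ) (fstar L μ : ℝ)
    (hL : 0 < L) (hμ : 0 < μ)
    (hf : ContDiff ℝ 1 f)
    (hLip : ∀ x y, ‖gradient f x - gradient f y‖ ≤ L * ‖x - y‖)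
    (hlb : ∀ x, fstar ≤ f x)
    (hne : {x : EuclideanSpace ℝ (Fin d) | f x = fstar}.Nonempty)
    (hPL : ∀ x, μ * (f x - fstar) ≤ (1/2) * ‖gradient f x‖^2) :
    ∀ x : EuclideanSpace ℝ (Fin d),
      (μ/2) * (Metric.infDist x {y | f y = fstar})^2 ≤ f x - fstar ∧
        f x - fstar ≤ (L/2) * (Metric.infDist x {y | f y = fstar})^2 := by
  simp only [← dist_eq_norm, dist_gradient_gradient, norm_gradient] at hLip hPL
  exact (stmt3_general (L := ⟨L, hL.le⟩) hμ (hf.differentiable one_ne_zero)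
    (.of_dist_le_mul hLip) hlb hPL).2
end

section
/- Let N ≥ 1 and let F : ℝ^N → ℝ and φ : ℝ^N → ℝ be functions with nonempty minimiser sets X*_F = argmin F and X*_φ = argmin φ and minimum values F* = 0 (i.e. F is nonnegative with infimum 0 attained) and φ* = min φ. Suppose F is differentiable with L_F-Lipschitz gradient and φ is differentiable with L_φ-Lipschitz gradient. Then the composite function f̂ = F + φ satisfies inf f̂ ≤ φ* + (min(L_F, L_φ)/2)·D², where D = inf { ‖x*_φ − x*_F‖ : x*_φ ∈ X*_φ, x*_F ∈ X*_F } is the distance between the two minimiser sets. -/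
open scoped RealInnerProductSpace

/-!
At a minimiser of a function with `L`-Lipschitz derivative the derivative vanishes, so the function
exceeds its minimum by at most `L / 2` times the squared distance to that minimiser. Given a
minimiser `x` of `φ` and a minimiser `y` of `F`, evaluate `F + φ` at `x`, where only `F` exceeds its
minimum, or at `y`, where only `φ` does: the better choice gives the bound with
`min LF Lφ / 2 * ‖x - y‖ ^ 2`. This bound is continuous in `‖x - y‖`, so it persists for the infimum
of these distances, which need not be attained.
-/

section QuadraticBound

variable {E G : Type*} [NormedAddCommGroup E] [NormedSpace ℝ E]
  [NormedAddCommGroup G] [NormedSpace ℝ G] {L : ℝ} {x y : E}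

theorem norm_sub_sub_le_of_norm_fderiv_sub_le {f : E → G} {f' : E → E →L[ℝ] G}
    (hf : ∀ z ∈ segment ℝ x y, HasFDerivAt f (f' z) z)
    (hL : ∀ z ∈ segment ℝ x y, ‖f' z - f' x‖ ≤ L * ‖z - x‖) :
    ‖f y - f x - f' x (y - x)‖ ≤ L / 2 * ‖y - x‖ ^ 2 := by
  let γ : ℝ → E := AffineMap.lineMap x y
  have hγ_mem : ∀ t ∈ Set.Icc (0 : ℝ) 1, γ t ∈ segment ℝ x y :=
    fun t ht ↦ lineMap_mem_segment ℝ x y ht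
  have hγ_sub : ∀ t, γ t - x = t • (y - x) := fun t ↦ by
    simp only [γ, AffineMap.lineMap_apply_module', add_sub_cancel_right]
  let r : ℝ → G := fun t ↦ f (γ t) - f x - f' x (γ t - x)
  have hr : ∀ t ∈ Set.Icc (0 : ℝ) 1, HasDerivAt r ((f' (γ t) - f' x) (y - x)) t := fun t ht ↦ by
    have hγ : HasDerivAt γ (y - x) t := AffineMap.hasDerivAt_lineMap
    exact (((hf _ (hγ_mem t ht)).comp_hasDerivAt t hγ).sub_const (f x)).sub
      ((f' x).hasFDerivAt.comp_hasDerivAt t (hγ.sub_const x))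
  have hbound : ∀ t ∈ Set.Ico (0 : ℝ) 1, ‖(f' (γ t) - f' x) (y - x)‖ ≤ L * ‖y - x‖ ^ 2 * t := by
    intro t ht
    calc ‖(f' (γ t) - f' x) (y - x)‖ ≤ ‖f' (γ t) - f' x‖ * ‖y - x‖ :=
          ContinuousLinearMap.le_opNorm _ _
      _ ≤ L * ‖γ t - x‖ * ‖y - x‖ := by gcongr; exact hL _ (hγ_mem t (Set.Ico_subset_Icc_self ht))
      _ = L * ‖y - x‖ ^ 2 * t := by rw [hγ_sub, norm_smul, Real.norm_of_nonneg ht.1]; ring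
  have hB : ∀ t : ℝ, HasDerivAt (fun t ↦ L / 2 * ‖y - x‖ ^ 2 * t ^ 2) (L * ‖y - x‖ ^ 2 * t) t :=
    fun t ↦ ((hasDerivAt_pow 2 t).const_mul (L / 2 * ‖y - x‖ ^ 2)).congr_deriv (by
      push_cast; ring)
  have hr_le : ‖r 1‖ ≤ L / 2 * ‖y - x‖ ^ 2 * 1 ^ 2 :=
    image_norm_le_of_norm_deriv_right_le_deriv_boundary
      (fun t ht ↦ (hr t ht).continuousAt.continuousWithinAt)
      (fun t ht ↦ (hr t (Set.Ico_subset_Icc_self ht)).hasDerivWithinAt)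
      (by simp [r, γ]) hB hbound (Set.right_mem_Icc.2 zero_le_one)
  simpa [r, γ] using hr_le

theorem abs_sub_le_of_isLocalExtr_of_norm_fderiv_sub_le {f : E → ℝ} {f' : E → E →L[ℝ] ℝ}
    (hx : IsLocalExtr f x) (hf : ∀ z ∈ segment ℝ x y, HasFDerivAt f (f' z) z)
    (hL : ∀ z ∈ segment ℝ x y, ‖f' z - f' x‖ ≤ L * ‖z - x‖) :
    |f y - f x| ≤ L / 2 * ‖y - x‖ ^ 2 := by
  have hx' : f' x = 0 := hx.hasFDerivAt_eq_zero (hf x (left_mem_segment ℝ x y))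
  simpa [hx'] using norm_sub_sub_le_of_norm_fderiv_sub_le hf hL

theorem le_add_sq_of_forall_le_of_norm_fderiv_sub_le {f : E → ℝ} (hf : Differentiable ℝ f)
    (hL : ∀ z, ‖fderiv ℝ f z - fderiv ℝ f x‖ ≤ L * ‖z - x‖) (hx : ∀ z, f x ≤ f z) (y : E) :
    f y ≤ f x + L / 2 * ‖y - x‖ ^ 2 := by
  have hmin : IsLocalMin f x := Filter.Eventually.of_forall hx
  exact sub_le_iff_le_add'.1 <| (le_abs_self _).trans <|
    abs_sub_le_of_isLocalExtr_of_norm_fderiv_sub_le (.inl hmin) (fun z _ ↦ (hf z).hasFDerivAt)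
      (fun z _ ↦ hL z)

end QuadraticBound

theorem le_apply_csInf_of_forall_le {α β : Type*} [ConditionallyCompleteLinearOrder α]
    [TopologicalSpace α] [OrderTopology α] [Preorder β] [TopologicalSpace β] [ClosedIciTopology β]
    {h : α → β} (hh : Continuous h) {S : Set α} {m : β}
    (hS : S.Nonempty) (hS' : BddBelow S) (hm : ∀ d ∈ S, m ≤ h d) : m ≤ h (sInf S) :=
  closure_minimal hm (isClosed_Ici.preimage hh) (csInf_mem_closure hS hS')

theorem csInf_range_add_le_add_min {α : Type*} {f g : α → ℝ} {a b p q : ℝ} {x y : α}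
    (hf : ∀ z, a ≤ f z) (hg : ∀ z, b ≤ g z) (hgx : g x = b) (hfy : f y = a)
    (hfx : f x ≤ a + p) (hgy : g y ≤ b + q) :
    sInf (Set.range fun z ↦ f z + g z) ≤ a + b + min p q := by
  have hbdd : BddBelow (Set.range fun z ↦ f z + g z) :=
    ⟨a + b, Set.forall_mem_range.2 fun z ↦ add_le_add (hf z) (hg z)⟩
  have hx : sInf (Set.range fun z ↦ f z + g z) ≤ f x + g x := csInf_le hbdd ⟨x, rfl⟩
  have hy : sInf (Set.range fun z ↦ f z + g z) ≤ f y + g y := csInf_le hbdd ⟨y, rfl⟩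
  rw [← min_add_add_left]
  exact le_min (by linarith) (by linarith)

theorem norm_gradient_sub_gradient {𝕜 H : Type*} [RCLike 𝕜] [NormedAddCommGroup H]
    [InnerProductSpace 𝕜 H] [CompleteSpace H] (f : H → 𝕜) (x y : H) :
    ‖gradient f x - gradient f y‖ = ‖fderiv 𝕜 f x - fderiv 𝕜 f y‖ := by
  rw [gradient, gradient, ← map_sub, LinearIsometryEquiv.norm_map]

theorem stmt6_general {E : Type*} [NormedAddCommGroup E] [NormedSpace ℝ E]
    {F φ : E → ℝ} {Fstar φstar LF Lφ : ℝ}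
    (hF : Differentiable ℝ F) (hφ : Differentiable ℝ φ)
    (hFLip : ∀ x y, ‖fderiv ℝ F x - fderiv ℝ F y‖ ≤ LF * ‖x - y‖)
    (hφLip : ∀ x y, ‖fderiv ℝ φ x - fderiv ℝ φ y‖ ≤ Lφ * ‖x - y‖)
    (hFlb : ∀ x, Fstar ≤ F x) (hXF : {x | F x = Fstar}.Nonempty)
    (hφlb : ∀ x, φstar ≤ φ x) (hXφ : {x | φ x = φstar}.Nonempty) :
    sInf (Set.range fun x ↦ F x + φ x) ≤ Fstar + φstar + min LF Lφ / 2 *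
      sInf ((fun p : E × E ↦ ‖p.1 - p.2‖) '' ({x | φ x = φstar} ×ˢ {x | F x = Fstar})) ^ 2 := by
  refine le_apply_csInf_of_forall_le (h := fun d ↦ Fstar + φstar + min LF Lφ / 2 * d ^ 2)
    (by fun_prop) ((hXφ.prod hXF).image _)
    ⟨0, Set.forall_mem_image.2 fun _ _ ↦ norm_nonneg _⟩ (Set.forall_mem_image.2 ?_)
  rintro ⟨x, y⟩ ⟨hx : φ x = φstar, hy : F y = Fstar⟩
  have hFx : F x ≤ Fstar + LF / 2 * ‖x - y‖ ^ 2 :=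
    hy ▸ le_add_sq_of_forall_le_of_norm_fderiv_sub_le hF (hFLip · y) (fun z ↦ hy ▸ hFlb z) x
  have hφy : φ y ≤ φstar + Lφ / 2 * ‖x - y‖ ^ 2 :=
    hx ▸ norm_sub_rev x y ▸
      le_add_sq_of_forall_le_of_norm_fderiv_sub_le hφ (hφLip · x) (fun z ↦ hx ▸ hφlb z) y
  calc sInf (Set.range fun x ↦ F x + φ x)
      ≤ Fstar + φstar + min (LF / 2 * ‖x - y‖ ^ 2) (Lφ / 2 * ‖x - y‖ ^ 2) :=
        csInf_range_add_le_add_min hFlb hφlb hx hy hFx hφy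
    _ = Fstar + φstar + min LF Lφ / 2 * ‖x - y‖ ^ 2 := by
        rw [← min_mul_of_nonneg _ _ (sq_nonneg _), min_div_div_right zero_le_two]

/-- bound on the infimum of the composite function `F + φ` in
terms of `φ*` and the distance between the minimiser sets of `F` and `φ`
(Lemma 2 of the paper). -/
theorem stmt6 (N : ℕ) (hN : 1 ≤ N)
    (F φ : EuclideanSpace ℝ (Fin N) → ℝ) (φstar LF Lφ : ℝ)
    (hF : Differentiable ℝ F) (hφ : Differentiable ℝ φ)
    (hFLip : ∀ x y, ‖gradient F x - gradient F y‖ ≤ LF * ‖x - y‖)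
    (hφLip : ∀ x y, ‖gradient φ x - gradient φ y‖ ≤ Lφ * ‖x - y‖)
    (hF0 : ∀ x, 0 ≤ F x)
    (hXF : {x : EuclideanSpace ℝ (Fin N) | F x = 0}.Nonempty)
    (hφlb : ∀ x, φstar ≤ φ x)
    (hXφ : {x : EuclideanSpace ℝ (Fin N) | φ x = φstar}.Nonempty) :
    sInf (Set.range fun x => F x + φ x) ≤
      φstar + (min LF Lφ / 2) *
        (sInf ((fun p : EuclideanSpace ℝ (Fin N) × EuclideanSpace ℝ (Fin N) =>
            ‖p.1 - p.2‖) ''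
          ({x | φ x = φstar} ×ˢ {x | F x = 0})))^2 := by
  simp only [norm_gradient_sub_gradient] at hFLip hφLip
  simpa only [zero_add] using stmt6_general hF hφ hFLip hφLip hF0 hXF hφlb hXφ
end

section
/- Let N ≥ 1 and let (f̂_k)_{k≥0} be a sequence of continuously differentiable functions f̂_k : ℝ^N → ℝ, each with L-Lipschitz gradient and satisfying the PL inequality with constant μ > 0, with nonempty minimiser sets X*_k and minimum values f̂*_k satisfying 0 ≤ f̂*_k ≤ M for all k and some M. Suppose |f̂_{k+1}(x) − f̂_k(x)| ≤ η₀ for all x and all k, and |f̂*_k − f̂*_{k+1}| ≤ η* for all k, with η₀, η* > 0. Fix α ∈ (0, 1/L], c > 1/μ, μ' = μ − 1/c, error vectors (ε_k) with f̂_k(x_k) ≥ (c/2)‖ε_k‖² for all k, and iterates x_{k+1} = x_k − α(∇f̂_k(x_k) + ε_k) from an initial point x₀. Then limsup_{k→∞} (1/2)·d(x_{k+1}, X*_{k+1})² ≤ (limsup_{k→∞} f̂*_k)/μ' + (η₀ + η*)/(α μ μ'). -/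
open scoped RealInnerProductSpace

/-!
For a fixed cost, an inexact gradient step of length `α ≤ 1/L` contracts the optimality gap by the
factor `1 - αμ`, up to the error `(α/2)‖ε‖²`. Since `‖ε‖²` is at most `2/c` times the function
value, that is, the gap plus the minimum, the error only lowers the rate to `μ - 1/c` and adds
`(α/c) f̂*`. A change of cost adds `η₀ + η*` to the gap, and the resulting scalar recursion is
solved by a geometric series.

The gap controls the distance to the minimisers: along exact gradient descent with step `t`, the
decrease of `√(f - f*)` dominates `(1 - tL/2)√(μ/2)` times the distance travelled, so the iterates
converge to a minimiser within `√(f x - f*) / ((1 - tL/2)√(μ/2))` of the starting point `x`;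
then `t → 0`.
-/

open Filter
open scoped Gradient Topology

section Sequences

lemma exists_tendsto_mul_dist_le_of_mul_dist_le_sub {X : Type*} [MetricSpace X] [CompleteSpace X]
    {y : ℕ → X} {a : ℕ → ℝ} {κ : ℝ} (hκ : 0 < κ) (ha : ∀ n, 0 ≤ a n)
    (h : ∀ n, κ * dist (y n) (y (n + 1)) ≤ a n - a (n + 1)) :
    ∃ z, Tendsto y atTop (𝓝 z) ∧ κ * dist (y 0) z ≤ a 0 := by
  have hsum (n : ℕ) : ∑ i ∈ Finset.range n, dist (y i) (y (i + 1)) ≤ a 0 / κ := by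
    rw [le_div_iff₀' hκ, Finset.mul_sum]
    calc ∑ i ∈ Finset.range n, κ * dist (y i) (y (i + 1))
        ≤ ∑ i ∈ Finset.range n, (a i - a (i + 1)) := Finset.sum_le_sum fun i _ ↦ h i
      _ = a 0 - a n := Finset.sum_range_sub' a n
      _ ≤ a 0 := sub_le_self _ (ha n)
  have hsummable := summable_of_sum_range_le (fun _ ↦ dist_nonneg) hsum
  obtain ⟨z, hz⟩ := cauchySeq_tendsto_of_complete (cauchySeq_of_summable_dist hsummable)
  refine ⟨z, hz, (le_div_iff₀' hκ).1 ?_⟩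
  exact (dist_le_tsum_dist_of_tendsto₀ hsummable hz).trans
    (Real.tsum_le_of_sum_range_le (fun _ ↦ dist_nonneg) hsum)

lemma eventually_lt_of_eventually_le_mul_add {u : ℕ → ℝ} {q b B : ℝ} (hq0 : 0 ≤ q) (hq1 : q < 1)
    (h : ∀ᶠ k in atTop, u (k + 1) ≤ q * u k + b) (hB : b / (1 - q) < B) :
    ∀ᶠ k in atTop, u k < B := by
  obtain ⟨K, hK⟩ := eventually_atTop.1 h
  set β := b / (1 - q) with hβ
  have hfix : q * β + b = β := by
    have : 1 - q ≠ 0 := (sub_pos.2 hq1).ne'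
    rw [hβ]
    field_simp
    ring
  have hgeom (n : ℕ) : u (n + K) ≤ q ^ n * (u K - β) + β := by
    induction n with
    | zero => simp
    | succ n ih =>
      calc u (n + 1 + K) = u (n + K + 1) := by rw [add_right_comm]
        _ ≤ q * u (n + K) + b := hK _ (Nat.le_add_left K n)
        _ ≤ q * (q ^ n * (u K - β) + β) + b := by gcongr
        _ = q ^ (n + 1) * (u K - β) + (q * β + b) := by ring
        _ = q ^ (n + 1) * (u K - β) + β := by rw [hfix]
  have hlim : Tendsto (fun n : ℕ ↦ q ^ n * (u K - β) + β) atTop (𝓝 β) := by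
    simpa only [zero_mul, zero_add] using
      ((tendsto_pow_atTop_nhds_zero_of_lt_one hq0 hq1).mul_const (u K - β)).add_const β
  rw [← map_add_atTop_eq_nat K, eventually_map]
  filter_upwards [hlim.eventually_lt_const hB] with n hn using (hgeom n).trans_lt hn

end Sequences

variable {E : Type*} [NormedAddCommGroup E] [InnerProductSpace ℝ E] [CompleteSpace E]
  {L μ c : ℝ}

/-- `L`-smoothness: `f` is differentiable with `L`-Lipschitz gradient. -/
structure HasLipschitzGradient (L : ℝ) (f : E → ℝ) : Prop where
  differentiable : Differentiable ℝ f
  norm_gradient_sub_le : ∀ x y, ‖∇ f x - ∇ f y‖ ≤ L * ‖x - y‖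

/-- The Polyak–Łojasiewicz inequality with constant `μ`, relative to a lower bound `m` of `f`.
That `m` is the minimum is not part of the definition: for `μ > 0` and an `L`-smooth `f` it
follows, see `PolyakLojasiewicz.exists_eq_mul_dist_le_sqrt`. -/
structure PolyakLojasiewicz_s8 (μ m : ℝ) (f : E → ℝ) : Prop where
  le : ∀ x, m ≤ f x
  mul_sub_le : ∀ x, μ * (f x - m) ≤ (1 / 2) * ‖∇ f x‖ ^ 2

/-- One step of exact gradient descent for `f` with step size `t`; its iterates join a point to a
nearby minimiser. -/
noncomputable def gradientStep (f : E → ℝ) (t : ℝ) (x : E) : E := x - t • ∇ f x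

namespace HasLipschitzGradient

variable {f : E → ℝ} {t : ℝ}

lemma continuous_gradient (hf : HasLipschitzGradient L f) : Continuous (∇ f) := by
  refine (LipschitzWith.of_dist_le_mul (K := L.toNNReal) fun x y ↦ ?_).continuous
  rw [dist_eq_norm, dist_eq_norm]
  exact (hf.norm_gradient_sub_le x y).trans
    (mul_le_mul_of_nonneg_right (Real.le_coe_toNNReal L) (norm_nonneg _))

lemma inner_gradient_add_smul_le (hf : HasLipschitzGradient L f) (x v : E) {s : ℝ} (hs : 0 ≤ s) :
    ⟪∇ f (x + s • v), v⟫ ≤ ⟪∇ f x, v⟫ + L * ‖v‖ ^ 2 * s := by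
  have hcs : ⟪∇ f (x + s • v) - ∇ f x, v⟫ ≤ L * ‖v‖ ^ 2 * s :=
    calc ⟪∇ f (x + s • v) - ∇ f x, v⟫
        ≤ ‖∇ f (x + s • v) - ∇ f x‖ * ‖v‖ := real_inner_le_norm _ _
      _ ≤ L * ‖x + s • v - x‖ * ‖v‖ := by gcongr; exact hf.norm_gradient_sub_le _ _
      _ = L * ‖v‖ ^ 2 * s := by
        rw [add_sub_cancel_left, norm_smul, Real.norm_of_nonneg hs]
        ring
  rw [inner_sub_left] at hcs
  linarith

lemma le_add_inner_add_sq (hf : HasLipschitzGradient L f) (x v : E) :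
    f (x + v) ≤ f x + ⟪∇ f x, v⟫ + L / 2 * ‖v‖ ^ 2 := by
  have hray (s : ℝ) : HasDerivAt (fun s : ℝ ↦ f (x + s • v)) ⟪∇ f (x + s • v), v⟫ s := by
    have hline : HasDerivAt (fun s : ℝ ↦ x + s • v) v s := by
      simpa only [id, one_smul] using ((hasDerivAt_id s).smul_const v).const_add x
    exact (hf.differentiable _).hasGradientAt.hasFDerivAt.comp_hasDerivAt s hline
  have hquad (s : ℝ) : HasDerivAt (fun s : ℝ ↦ f x + s * ⟪∇ f x, v⟫ + L / 2 * ‖v‖ ^ 2 * s ^ 2)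
      (⟪∇ f x, v⟫ + L * ‖v‖ ^ 2 * s) s :=
    ((((hasDerivAt_id s).mul_const ⟪∇ f x, v⟫).const_add (f x)).add
      ((hasDerivAt_pow 2 s).const_mul (L / 2 * ‖v‖ ^ 2))).congr_deriv (by norm_num; ring)
  have h := image_le_of_deriv_right_le_deriv_boundary (a := 0) (b := 1)
    (fun s _ ↦ (hray s).continuousAt.continuousWithinAt)
    (fun s _ ↦ (hray s).hasDerivWithinAt) (by simp)
    (fun s _ ↦ (hquad s).continuousAt.continuousWithinAt)
    (fun s _ ↦ (hquad s).hasDerivWithinAt)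
    (fun s hs ↦ hf.inner_gradient_add_smul_le x v hs.1) (Set.right_mem_Icc.2 zero_le_one)
  simpa only [one_smul, one_mul, one_pow, mul_one] using h

lemma apply_gradientStep_le (hf : HasLipschitzGradient L f) (t : ℝ) (x : E) :
    f (gradientStep f t x) ≤ f x - (1 - t * L / 2) * t * ‖∇ f x‖ ^ 2 := by
  have h := hf.le_add_inner_add_sq x (-(t • ∇ f x))
  rw [← sub_eq_add_neg, norm_neg, norm_smul, mul_pow, Real.norm_eq_abs, sq_abs, inner_neg_right,
    inner_smul_right, real_inner_self_eq_norm_sq] at h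
  unfold gradientStep
  linarith

-- With `t L ≤ 1` the quadratic term is at most `(t/2)‖∇f + e‖²`, which cancels the cross term
-- `t⟪∇f, e⟫` exactly.
lemma apply_sub_smul_gradient_add_le (hf : HasLipschitzGradient L f) (ht : 0 ≤ t)
    (htL : t * L ≤ 1) (x e : E) :
    f (x - t • (∇ f x + e)) ≤ f x - t / 2 * ‖∇ f x‖ ^ 2 + t / 2 * ‖e‖ ^ 2 := by
  have h := hf.le_add_inner_add_sq x (-(t • (∇ f x + e)))
  rw [← sub_eq_add_neg, norm_neg, norm_smul, Real.norm_of_nonneg ht, inner_neg_right,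
    inner_smul_right, inner_add_right, real_inner_self_eq_norm_sq] at h
  have hquad : L / 2 * (t * ‖∇ f x + e‖) ^ 2
      ≤ t / 2 * (‖∇ f x‖ ^ 2 + 2 * ⟪∇ f x, e⟫ + ‖e‖ ^ 2) :=
    calc L / 2 * (t * ‖∇ f x + e‖) ^ 2 = t * L * (t / 2 * ‖∇ f x + e‖ ^ 2) := by ring
      _ ≤ t / 2 * ‖∇ f x + e‖ ^ 2 := mul_le_of_le_one_left (by positivity) htL
      _ = _ := by rw [norm_add_sq_real]
  linarith

end HasLipschitzGradient

namespace PolyakLojasiewicz_s8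

variable {f : E → ℝ} {m t : ℝ}

lemma apply_sub_smul_gradient_add_sub_le (hpl : PolyakLojasiewicz_s8 μ m f)
    (hf : HasLipschitzGradient L f) (ht : 0 ≤ t) (htL : t * L ≤ 1) (x e : E) :
    f (x - t • (∇ f x + e)) - m ≤ (1 - t * μ) * (f x - m) + t / 2 * ‖e‖ ^ 2 := by
  have hdescent := hf.apply_sub_smul_gradient_add_le ht htL x e
  have hgrad := mul_le_mul_of_nonneg_left (hpl.mul_sub_le x) ht
  linarith

lemma apply_sub_smul_gradient_add_sub_le_of_norm_sq_le (hpl : PolyakLojasiewicz_s8 μ m f)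
    (hf : HasLipschitzGradient L f) (ht : 0 ≤ t) (htL : t * L ≤ 1) (hc : 0 < c) {x e : E}
    (he : c / 2 * ‖e‖ ^ 2 ≤ f x) :
    f (x - t • (∇ f x + e)) - m ≤ (1 - t * (μ - 1 / c)) * (f x - m) + t / c * m := by
  have herr : t / 2 * ‖e‖ ^ 2 ≤ t / c * f x :=
    calc t / 2 * ‖e‖ ^ 2 = t / c * (c / 2 * ‖e‖ ^ 2) := by field_simp
      _ ≤ t / c * f x := by gcongr
  calc f (x - t • (∇ f x + e)) - m
      ≤ (1 - t * μ) * (f x - m) + t / 2 * ‖e‖ ^ 2 :=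
        hpl.apply_sub_smul_gradient_add_sub_le hf ht htL x e
    _ ≤ (1 - t * μ) * (f x - m) + t / c * f x := by gcongr
    _ = (1 - t * (μ - 1 / c)) * (f x - m) + t / c * m := by ring

lemma eq_of_one_lt_mul (hpl : PolyakLojasiewicz_s8 μ m f) (hf : HasLipschitzGradient L f)
    (ht : 0 ≤ t) (htL : t * L ≤ 1) (htμ : 1 < t * μ) (x : E) : f x = m := by
  have hstep := hpl.apply_sub_smul_gradient_add_sub_le hf ht htL x 0
  have hnonneg : 0 ≤ (1 - t * μ) * (f x - m) := by
    simpa using (sub_nonneg.2 (hpl.le _)).trans hstep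
  exact (sub_nonpos.1 (nonpos_of_mul_nonneg_right hnonneg (sub_neg.2 htμ))).antisymm (hpl.le x)

lemma sqrt_mul_sqrt_le_norm_gradient (hpl : PolyakLojasiewicz_s8 μ m f) (hμ : 0 ≤ μ) (x : E) :
    2 * √(μ / 2) * √(f x - m) ≤ ‖∇ f x‖ := by
  refine le_of_sq_le_sq ?_ (norm_nonneg _)
  rw [mul_pow, mul_pow, Real.sq_sqrt (by positivity), Real.sq_sqrt (sub_nonneg.2 (hpl.le x))]
  linarith [hpl.mul_sub_le x]

lemma mul_dist_gradientStep_le (hpl : PolyakLojasiewicz_s8 μ m f) (hf : HasLipschitzGradient L f)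
    (hμ : 0 ≤ μ) (ht : 0 ≤ t) (htL : t * L ≤ 1) (x : E) :
    (1 - t * L / 2) * √(μ / 2) * dist x (gradientStep f t x)
      ≤ √(f x - m) - √(f (gradientStep f t x) - m) := by
  set r := √(μ / 2)
  set s := √(f x - m) with hs
  set s' := √(f (gradientStep f t x) - m) with hs'
  set G := ‖∇ f x‖
  have hdist : dist x (gradientStep f t x) = t * G := by
    rw [gradientStep, dist_eq_norm, sub_sub_cancel, norm_smul, Real.norm_of_nonneg ht]
  have hdescent : (1 - t * L / 2) * t * G ^ 2 ≤ s ^ 2 - s' ^ 2 := by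
    rw [hs, hs', Real.sq_sqrt (sub_nonneg.2 (hpl.le _)), Real.sq_sqrt (sub_nonneg.2 (hpl.le _))]
    linarith [hf.apply_gradientStep_le t x]
  have hrate : 0 ≤ (1 - t * L / 2) * t := mul_nonneg (by linarith) ht
  have hle : s' ≤ s :=
    le_of_sq_le_sq (sub_nonneg.1 (hdescent.trans' (by positivity))) (Real.sqrt_nonneg _)
  have hdecr : 0 ≤ s - s' := sub_nonneg.2 hle
  have hPL : 2 * r * s ≤ G := hpl.sqrt_mul_sqrt_le_norm_gradient hμ x
  rw [hdist]
  obtain hG | hG : 0 = G ∨ 0 < G := (norm_nonneg _).eq_or_lt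
  · simpa only [← hG, mul_zero, sub_nonneg] using hle
  · refine le_of_mul_le_mul_right ?_ hG
    calc (1 - t * L / 2) * r * (t * G) * G = r * ((1 - t * L / 2) * t * G ^ 2) := by ring
      _ ≤ r * (s ^ 2 - s' ^ 2) := by gcongr
      _ = (s - s') * (r * s + r * s') := by ring
      _ ≤ (s - s') * (r * s + r * s) := by gcongr
      _ = (s - s') * (2 * r * s) := by ring
      _ ≤ (s - s') * G := mul_le_mul_of_nonneg_left hPL hdecr

lemma eq_of_gradient_eq_zero (hpl : PolyakLojasiewicz_s8 μ m f) (hμ : 0 < μ) {z : E}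
    (hz : ∇ f z = 0) : f z = m := by
  have hnonpos : μ * (f z - m) ≤ 0 := by simpa [hz] using hpl.mul_sub_le z
  exact (sub_nonpos.1 (nonpos_of_mul_nonpos_right hnonpos hμ)).antisymm (hpl.le z)

lemma exists_eq_mul_dist_le_sqrt (hpl : PolyakLojasiewicz_s8 μ m f) (hf : HasLipschitzGradient L f)
    (hμ : 0 < μ) (ht : 0 < t) (htL : t * L ≤ 1) (x : E) :
    ∃ z, f z = m ∧ (1 - t * L / 2) * √(μ / 2) * dist x z ≤ √(f x - m) := by
  have hκ : 0 < (1 - t * L / 2) * √(μ / 2) :=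
    mul_pos (by linarith) (Real.sqrt_pos.2 (by positivity))
  obtain ⟨z, hz, hdist⟩ := exists_tendsto_mul_dist_le_of_mul_dist_le_sub
    (y := fun n ↦ (gradientStep f t)^[n] x) (a := fun n ↦ √(f ((gradientStep f t)^[n] x) - m))
    hκ (fun _ ↦ Real.sqrt_nonneg _) fun n ↦ by
      simpa only [Function.iterate_succ_apply'] using
        hpl.mul_dist_gradientStep_le hf hμ.le ht.le htL _
  have hcont : Continuous (gradientStep f t) :=
    continuous_id.sub (hf.continuous_gradient.const_smul t)
  have hfix : z - t • ∇ f z = z := isFixedPt_of_tendsto_iterate hz hcont.continuousAt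
  have hgrad : ∇ f z = 0 := (smul_eq_zero.1 (sub_eq_self.1 hfix)).resolve_left ht.ne'
  exact ⟨z, hpl.eq_of_gradient_eq_zero hμ hgrad, hdist⟩

lemma sqrt_mul_infDist_le_sqrt (hpl : PolyakLojasiewicz_s8 μ m f) (hf : HasLipschitzGradient L f)
    (hμ : 0 < μ) (x : E) :
    √(μ / 2) * Metric.infDist x {y | f y = m} ≤ √(f x - m) := by
  set D := Metric.infDist x {y | f y = m}
  have hlim : Tendsto (fun t : ℝ ↦ (1 - t * L / 2) * √(μ / 2) * D) (𝓝[>] 0)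
      (𝓝 (√(μ / 2) * D)) := by
    have : Continuous fun t : ℝ ↦ (1 - t * L / 2) * √(μ / 2) * D := by fun_prop
    simpa using (this.tendsto 0).mono_left nhdsWithin_le_nhds
  have hsmall : ∀ᶠ t : ℝ in 𝓝[>] 0, t * L < 1 := by
    have : Continuous fun t : ℝ ↦ t * L := by fun_prop
    exact ((this.tendsto 0).eventually_lt_const (by simp)).filter_mono nhdsWithin_le_nhds
  refine le_of_tendsto hlim ?_
  filter_upwards [hsmall, self_mem_nhdsWithin] with t htL ht
  obtain ⟨z, hz, hdist⟩ := hpl.exists_eq_mul_dist_le_sqrt hf hμ ht htL.le x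
  have hrate : 0 ≤ 1 - t * L / 2 := by linarith
  calc (1 - t * L / 2) * √(μ / 2) * D ≤ (1 - t * L / 2) * √(μ / 2) * dist x z := by
        gcongr
        exact Metric.infDist_le_dist_of_mem hz
    _ ≤ √(f x - m) := hdist

theorem half_mul_infDist_sq_le (hpl : PolyakLojasiewicz_s8 μ m f) (hf : HasLipschitzGradient L f)
    (hμ : 0 < μ) (x : E) :
    (1 / 2) * Metric.infDist x {y | f y = m} ^ 2 ≤ (f x - m) / μ := by
  have h := pow_le_pow_left₀ (mul_nonneg (Real.sqrt_nonneg _) Metric.infDist_nonneg)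
    (hpl.sqrt_mul_infDist_le_sqrt hf hμ x) 2
  rw [mul_pow, Real.sq_sqrt (by positivity), Real.sq_sqrt (sub_nonneg.2 (hpl.le x))] at h
  rw [le_div_iff₀ hμ]
  linarith

end PolyakLojasiewicz_s8

section TimeVarying

variable {f : ℕ → E → ℝ} {fstar : ℕ → ℝ} {α : ℝ} {ε x : ℕ → E}

lemma gap_inexact_gradient_descent_succ_le {η : ℝ} (hf : ∀ k, HasLipschitzGradient L (f k))
    (hpl : ∀ k, PolyakLojasiewicz_s8 μ (fstar k) (f k))
    (hdrift : ∀ k y, f (k + 1) y - fstar (k + 1) ≤ f k y - fstar k + η)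
    (hα : 0 ≤ α) (hαL : α * L ≤ 1) (hc : 0 < c)
    (hx : ∀ k, x (k + 1) = x k - α • (∇ (f k) (x k) + ε k))
    (hε : ∀ k, c / 2 * ‖ε k‖ ^ 2 ≤ f k (x k)) (k : ℕ) :
    f (k + 1) (x (k + 1)) - fstar (k + 1)
      ≤ (1 - α * (μ - 1 / c)) * (f k (x k) - fstar k) + (α / c * fstar k + η) := by
  have hstep := (hpl k).apply_sub_smul_gradient_add_sub_le_of_norm_sq_le (hf k) hα hαL hc (hε k)
  rw [← hx k] at hstep
  linarith [hdrift k (x (k + 1))]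

lemma eventually_gap_inexact_gradient_descent_lt {η s B : ℝ}
    (hf : ∀ k, HasLipschitzGradient L (f k))
    (hpl : ∀ k, PolyakLojasiewicz_s8 μ (fstar k) (f k))
    (hdrift : ∀ k y, f (k + 1) y - fstar (k + 1) ≤ f k y - fstar k + η)
    (hα : 0 < α) (hαL : α * L ≤ 1) (hc : 0 < c) (hμc : 0 < μ - 1 / c)
    (hx : ∀ k, x (k + 1) = x k - α • (∇ (f k) (x k) + ε k))
    (hε : ∀ k, c / 2 * ‖ε k‖ ^ 2 ≤ f k (x k)) (hs0 : 0 ≤ s)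
    (hs : ∀ᶠ k in atTop, fstar k ≤ s) (hB : (α / c * s + η) / (α * (μ - 1 / c)) < B) :
    ∀ᶠ k in atTop, f k (x k) - fstar k < B := by
  rcases le_or_gt (α * (μ - 1 / c)) 1 with hle | hlt
  · refine eventually_lt_of_eventually_le_mul_add (q := 1 - α * (μ - 1 / c))
      (b := α / c * s + η) (sub_nonneg.2 hle) (sub_lt_self _ (by positivity)) ?_
      (by rwa [sub_sub_cancel])
    filter_upwards [hs] with k hk
    refine (gap_inexact_gradient_descent_succ_le hf hpl hdrift hα.le hαL hc hx hε k).trans ?_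
    gcongr
  -- The contraction factor is negative, so even the noiseless factor `1 - αμ` is: every cost is
  -- constant.
  · have hαμ : 1 < α * μ := by
      refine hlt.trans_le ?_
      gcongr
      exact sub_le_self _ (by positivity)
    have hgap (k : ℕ) (y : E) : f k y - fstar k = 0 :=
      sub_eq_zero.2 ((hpl k).eq_of_one_lt_mul (hf k) hα.le hαL hαμ y)
    have hη : 0 ≤ η := by simpa only [hgap, zero_add] using hdrift 0 0
    have hB0 : 0 < B := hB.trans_le' (by positivity)
    simpa only [hgap] using Eventually.of_forall fun _ ↦ hB0

lemma eventually_half_mul_infDist_sq_lt {η s B : ℝ} (hf : ∀ k, HasLipschitzGradient L (f k))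
    (hpl : ∀ k, PolyakLojasiewicz_s8 μ (fstar k) (f k))
    (hdrift : ∀ k y, f (k + 1) y - fstar (k + 1) ≤ f k y - fstar k + η)
    (hα : 0 < α) (hαL : α * L ≤ 1) (hc : 0 < c) (hμc : 0 < μ - 1 / c)
    (hx : ∀ k, x (k + 1) = x k - α • (∇ (f k) (x k) + ε k))
    (hε : ∀ k, c / 2 * ‖ε k‖ ^ 2 ≤ f k (x k)) (hs0 : 0 ≤ s)
    (hs : ∀ᶠ k in atTop, fstar k ≤ s)
    (hB : s / (μ - 1 / c) + η / (α * μ * (μ - 1 / c)) < B) :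
    ∀ᶠ k in atTop, (1 / 2) * Metric.infDist (x k) {y | f k y = fstar k} ^ 2 < B := by
  have hμ : 0 < μ := (one_div_pos.2 hc).trans (sub_pos.1 hμc)
  have hgapB : (α / c * s + η) / (α * (μ - 1 / c)) < B * μ :=
    calc (α / c * s + η) / (α * (μ - 1 / c))
        = 1 / c * (s / (μ - 1 / c)) + η / (α * μ * (μ - 1 / c)) * μ := by
          have hν := hμc.ne'
          generalize μ - 1 / c = ν at hν ⊢
          field_simp
      _ ≤ μ * (s / (μ - 1 / c)) + η / (α * μ * (μ - 1 / c)) * μ := by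
          gcongr
          exact (sub_pos.1 hμc).le
      _ = (s / (μ - 1 / c) + η / (α * μ * (μ - 1 / c))) * μ := by ring
      _ < B * μ := by gcongr
  filter_upwards [eventually_gap_inexact_gradient_descent_lt hf hpl hdrift hα hαL hc hμc hx hε
    hs0 hs hgapB] with k hk
  exact ((hpl k).half_mul_infDist_sq_le (hf k) hμ _).trans_lt ((div_lt_iff₀ hμ).2 hk)

theorem stmt8_general {η₀ ηs M : ℝ} (hμ : 0 < μ)
    (hf : ∀ k, HasLipschitzGradient L (f k))
    (hpl : ∀ k, PolyakLojasiewicz_s8 μ (fstar k) (f k))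
    (hfstar0 : ∀ k, 0 ≤ fstar k) (hfstarM : ∀ k, fstar k ≤ M)
    (hdrift : ∀ k y, |f (k + 1) y - f k y| ≤ η₀)
    (hdrifts : ∀ k, |fstar k - fstar (k + 1)| ≤ ηs)
    (hα : 0 < α) (hαL : α * L ≤ 1) (hc : 1 / μ < c)
    (hx : ∀ k, x (k + 1) = x k - α • (∇ (f k) (x k) + ε k))
    (hε : ∀ k, c / 2 * ‖ε k‖ ^ 2 ≤ f k (x k)) :
    limsup (fun k ↦ (1 / 2) * Metric.infDist (x (k + 1)) {y | f (k + 1) y = fstar (k + 1)} ^ 2)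
        atTop
      ≤ limsup fstar atTop / (μ - 1 / c) + (η₀ + ηs) / (α * μ * (μ - 1 / c)) := by
  have hc0 : 0 < c := hc.trans' (by positivity)
  have hμc : 0 < μ - 1 / c := sub_pos.2 ((one_div_lt hμ hc0).1 hc)
  have hbdd : IsBoundedUnder (· ≤ ·) atTop fstar := isBoundedUnder_of ⟨M, hfstarM⟩
  have hlimsup0 : 0 ≤ limsup fstar atTop :=
    le_limsup_of_frequently_le (Frequently.of_forall hfstar0) hbdd
  refine le_of_forall_gt_imp_ge_of_dense fun B hB ↦ ?_
  obtain ⟨s, hs, hsB⟩ : ∃ s, limsup fstar atTop < s ∧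
      s < (B - (η₀ + ηs) / (α * μ * (μ - 1 / c))) * (μ - 1 / c) :=
    exists_between ((div_lt_iff₀ hμc).1 (lt_sub_iff_add_lt.2 hB))
  have hdist := eventually_half_mul_infDist_sq_lt hf hpl (η := η₀ + ηs)
    (fun k y ↦ by linarith [(abs_le.1 (hdrift k y)).2, (abs_le.1 (hdrifts k)).2])
    hα hαL hc0 hμc hx hε (hlimsup0.trans hs.le)
    ((eventually_lt_of_limsup_lt hs hbdd).mono fun _ ↦ le_of_lt)
    (lt_sub_iff_add_lt.1 ((div_lt_iff₀ hμc).2 hsB))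
  exact limsup_le_of_le (isCoboundedUnder_le_of_le atTop (x := 0) fun k ↦ by positivity)
    (((tendsto_add_atTop_nat 1).eventually hdist).mono fun _ ↦ le_of_lt)

end TimeVarying

/-- asymptotic neighbourhood of convergence for the composite
dynamics (limit bound of Theorem 1 of the paper). -/
theorem stmt8 (N : ℕ) (hN : 1 ≤ N)
    (f : ℕ → EuclideanSpace ℝ (Fin N) → ℝ)
    (fstar : ℕ → ℝ) (L μ η₀ ηs α c M : ℝ)
    (hL : 0 < L) (hμ : 0 < μ) (hη₀ : 0 < η₀) (hηs : 0 < ηs)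
    (hdiff : ∀ k, ContDiff ℝ 1 (f k))
    (hLip : ∀ k x y, ‖gradient (f k) x - gradient (f k) y‖ ≤ L * ‖x - y‖)
    (hlb : ∀ k x, fstar k ≤ f k x)
    (hne : ∀ k, {x : EuclideanSpace ℝ (Fin N) | f k x = fstar k}.Nonempty)
    (hfstar0 : ∀ k, 0 ≤ fstar k) (hfstarM : ∀ k, fstar k ≤ M)
    (hPL : ∀ k x, μ * (f k x - fstar k) ≤ (1/2) * ‖gradient (f k) x‖^2)
    (hdrift : ∀ k x, |f (k+1) x - f k x| ≤ η₀)
    (hdrifts : ∀ k, |fstar k - fstar (k+1)| ≤ ηs)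
    (hα : 0 < α) (hα' : α ≤ 1/L)
    (hc : 1/μ < c)
    (ε x : ℕ → EuclideanSpace ℝ (Fin N))
    (hx : ∀ k, x (k+1) = x k - α • (gradient (f k) (x k) + ε k))
    (hεbound : ∀ k, (c/2) * ‖ε k‖^2 ≤ f k (x k)) :
    Filter.limsup
        (fun k => (1/2) * (Metric.infDist (x (k+1)) {y | f (k+1) y = fstar (k+1)})^2)
        Filter.atTop ≤
      (Filter.limsup fstar Filter.atTop) / (μ - 1/c) + (η₀ + ηs)/(α * μ * (μ - 1/c)) :=
  stmt8_general hμ (fun k ↦ ⟨(hdiff k).differentiable one_ne_zero, hLip k⟩)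
    (fun k ↦ ⟨hlb k, hPL k⟩) hfstar0 hfstarM hdrift hdrifts hα ((le_div_iff₀ hL).1 hα') hc hx
    hεbound
end

section
/- Let d ≥ 1 and let f : ℝ^d → ℝ be continuously differentiable with L-Lipschitz gradient. Let x ∈ ℝ^d and let y₁, …, y_m ∈ ℝ^d be points, all distinct from x, such that the vectors y₁ − x, …, y_m − x span ℝ^d. For each j define the unit vector v_j = (y_j − x)/‖y_j − x‖, the slope s_j = (f(y_j) − f(x))/‖y_j − x‖, and a_j = (L/2)‖y_j − x‖. Then the polyhedron P = { z ∈ ℝ^d : |v_jᵀz − s_j| ≤ a_j for all j = 1, …, m } contains the gradient ∇f(x), and P is a bounded subset of ℝ^d. -/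
open scoped RealInnerProductSpace

/-!
If the gradient varies by at most `L * ‖z - x‖` from its value at `x`, then the first-order Taylor
remainder at `x` is at most `L / 2 * ‖y - x‖ ^ 2`; dividing by `‖y j - x‖` gives the `j`-th
constraint at `z = ∇ f x`. Conversely the `j`-th constraint bounds `⟪y j - x, z⟫` uniformly over
the polyhedron. By linearity `⟪w, z⟫` is then bounded for every `w` in the span, that is for every
`w`, and the uniform boundedness principle bounds `‖z‖`.
-/

section TaylorRemainder

variable {E F : Type*} [NormedAddCommGroup E] [NormedSpace ℝ E] [NormedAddCommGroup F]
  [NormedSpace ℝ F] {f : E → F} {f' : E → E →L[ℝ] F} {s : Set E} {x y : E} {L : ℝ}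

theorem hasDerivWithinAt_segment_remainder (hs : StarConvex ℝ x s)
    (hf : ∀ z ∈ s, HasFDerivWithinAt f (f' z) s z) (hy : y ∈ s) {t : ℝ} (ht : t ∈ Set.Icc 0 1) :
    HasDerivWithinAt (fun r : ℝ ↦ f (x + r • (y - x)) - f x - r • f' x (y - x))
      ((f' (x + t • (y - x)) - f' x) (y - x)) (Set.Icc 0 1) t := by
  have hmaps : Set.MapsTo (fun r : ℝ ↦ x + r • (y - x)) (Set.Icc 0 1) s :=
    fun r hr ↦ hs.add_smul_sub_mem hy hr.1 hr.2
  have hline : HasDerivWithinAt (fun r : ℝ ↦ x + r • (y - x)) (y - x) (Set.Icc 0 1) t := by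
    simpa using (((hasDerivAt_id t).smul_const (y - x)).const_add x).hasDerivWithinAt
  have hcomp := (hf _ (hmaps ht)).comp_hasDerivWithinAt t hline hmaps
  have hlinear : HasDerivWithinAt (fun r : ℝ ↦ r • f' x (y - x)) (f' x (y - x))
      (Set.Icc 0 1) t := by
    simpa using ((hasDerivAt_id t).smul_const (f' x (y - x))).hasDerivWithinAt
  exact (hcomp.sub_const (f x)).sub hlinear

theorem norm_image_sub_sub_le_of_norm_hasFDerivWithin_sub_le (hs : StarConvex ℝ x s)
    (hf : ∀ z ∈ s, HasFDerivWithinAt f (f' z) s z)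
    (hL : ∀ z ∈ s, ‖f' z - f' x‖ ≤ L * ‖z - x‖) (hy : y ∈ s) :
    ‖f y - f x - f' x (y - x)‖ ≤ L / 2 * ‖y - x‖ ^ 2 := by
  have hderiv {t : ℝ} (ht : t ∈ Set.Icc 0 1) := hasDerivWithinAt_segment_remainder hs hf hy ht
  have hbound (t : ℝ) :
      HasDerivAt (fun r : ℝ ↦ L / 2 * ‖y - x‖ ^ 2 * r ^ 2) (L * ‖y - x‖ ^ 2 * t) t :=
    ((hasDerivAt_pow 2 t).const_mul (L / 2 * ‖y - x‖ ^ 2)).congr_deriv (by norm_num; ring)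
  have hderiv_le {t : ℝ} (ht : t ∈ Set.Ico 0 1) :
      ‖(f' (x + t • (y - x)) - f' x) (y - x)‖ ≤ L * ‖y - x‖ ^ 2 * t := by
    have hmem : x + t • (y - x) ∈ s := hs.add_smul_sub_mem hy ht.1 ht.2.le
    calc ‖(f' (x + t • (y - x)) - f' x) (y - x)‖
        ≤ L * ‖x + t • (y - x) - x‖ * ‖y - x‖ :=
          ContinuousLinearMap.le_of_opNorm_le _ (hL _ hmem) _
      _ = L * ‖y - x‖ ^ 2 * t := by
          rw [add_sub_cancel_left, norm_smul, Real.norm_of_nonneg ht.1]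
          ring
  simpa using image_norm_le_of_norm_deriv_right_le_deriv_boundary
    (fun t ht ↦ (hderiv ht).continuousWithinAt)
    (fun t ht ↦ (hderiv (Set.Ico_subset_Icc_self ht)).mono_of_mem_nhdsWithin
      (Icc_mem_nhdsGE_of_mem ht))
    (by simp) hbound (fun t ht ↦ hderiv_le ht) (Set.right_mem_Icc.2 zero_le_one)

end TaylorRemainder

section WeaklyBounded

variable {𝕜 E : Type*} [RCLike 𝕜]

theorem exists_norm_inner_le_of_mem_span [SeminormedAddCommGroup E] [InnerProductSpace 𝕜 E]
    {S T : Set E} (hT : ∀ v ∈ T, ∃ C, ∀ z ∈ S, ‖inner 𝕜 v z‖ ≤ C) {w : E}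
    (hw : w ∈ Submodule.span 𝕜 T) : ∃ C, ∀ z ∈ S, ‖inner 𝕜 w z‖ ≤ C := by
  induction hw using Submodule.span_induction with
  | mem v hv => exact hT v hv
  | zero => exact ⟨0, by simp⟩
  | add u v _ _ hu hv =>
    obtain ⟨A, hA⟩ := hu
    obtain ⟨B, hB⟩ := hv
    refine ⟨A + B, fun z hz ↦ ?_⟩
    rw [inner_add_left]
    exact norm_add_le_of_le (hA z hz) (hB z hz)
  | smul c v _ hv =>
    obtain ⟨A, hA⟩ := hv
    refine ⟨‖c‖ * A, fun z hz ↦ ?_⟩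
    rw [inner_smul_left, norm_mul, RCLike.norm_conj]
    exact mul_le_mul_of_nonneg_left (hA z hz) (norm_nonneg c)

variable [NormedAddCommGroup E] [InnerProductSpace 𝕜 E] [CompleteSpace E]

theorem isBounded_of_forall_exists_norm_inner_le {S : Set E}
    (hS : ∀ w, ∃ C, ∀ z ∈ S, ‖inner 𝕜 w z‖ ≤ C) : Bornology.IsBounded S := by
  obtain ⟨C, hC⟩ : ∃ C, ∀ z : S, ‖innerSL 𝕜 (z : E)‖ ≤ C := by
    refine banach_steinhaus fun w ↦ (hS w).imp fun C hC z ↦ ?_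
    rw [innerSL_apply_apply, norm_inner_symm]
    exact hC z z.2
  exact isBounded_iff_forall_norm_le.2
    ⟨C, fun z hz ↦ (innerSL_apply_norm 𝕜 z).symm.trans_le (hC ⟨z, hz⟩)⟩

theorem isBounded_setOf_norm_inner_sub_le {ι : Type*} {v : ι → E}
    (hv : Submodule.span 𝕜 (Set.range v) = ⊤) (s : ι → 𝕜) (a : ι → ℝ) :
    Bornology.IsBounded {z : E | ∀ j, ‖inner 𝕜 (v j) z - s j‖ ≤ a j} := by
  refine isBounded_of_forall_exists_norm_inner_le (𝕜 := 𝕜) fun w ↦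
    exists_norm_inner_le_of_mem_span (Set.forall_mem_range.2 fun j ↦ ?_) (hv ▸ Submodule.mem_top)
  exact ⟨a j + ‖s j‖, fun z hz ↦ (norm_le_norm_sub_add _ (s j)).trans (by gcongr; exact hz j)⟩

end WeaklyBounded

section SlopePolyhedron

variable {E ι : Type*} [NormedAddCommGroup E] [InnerProductSpace ℝ E]

theorem abs_inner_normalize_sub_div_norm_le_iff {u : E} (hu : u ≠ 0) (z : E) (δ c : ℝ) :
    |⟪‖u‖⁻¹ • u, z⟫ - δ / ‖u‖| ≤ c * ‖u‖ ↔ |⟪u, z⟫ - δ| ≤ c * ‖u‖ ^ 2 := by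
  have hpos : 0 < ‖u‖ := norm_pos_iff.2 hu
  rw [real_inner_smul_left, inv_mul_eq_div, ← sub_div, abs_div, abs_norm, div_le_iff₀ hpos,
    mul_assoc, ← sq]

/-- The polyhedron `P` of vectors `z` whose component along each unit vector
`v j = (y j - x) / ‖y j - x‖` differs from the finite-difference slope `s j` of `f` by at most
`a j = L / 2 * ‖y j - x‖`. It localizes the gradient of `f` at `x` from values of `f` alone. The
index type is arbitrary, so `P` is a genuine polyhedron only when `ι` is finite. -/
def slopePolyhedron (f : E → ℝ) (L : ℝ) (x : E) (y : ι → E) : Set E :=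
  {z | ∀ j, |⟪‖y j - x‖⁻¹ • (y j - x), z⟫ - (f (y j) - f x) / ‖y j - x‖| ≤ L / 2 * ‖y j - x‖}

variable {f : E → ℝ} {L : ℝ} {x : E} {y : ι → E}

theorem mem_slopePolyhedron_iff (hy : ∀ j, y j ≠ x) {z : E} :
    z ∈ slopePolyhedron f L x y ↔
      ∀ j, |⟪y j - x, z⟫ - (f (y j) - f x)| ≤ L / 2 * ‖y j - x‖ ^ 2 :=
  forall_congr' fun j ↦ abs_inner_normalize_sub_div_norm_le_iff (sub_ne_zero.2 (hy j)) z _ _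

variable [CompleteSpace E]

theorem hasGradientWithinAt_mem_slopePolyhedron {f' : E → E} {s : Set E} (hs : StarConvex ℝ x s)
    (hf : ∀ z ∈ s, HasGradientWithinAt f (f' z) s z)
    (hL : ∀ z ∈ s, ‖f' z - f' x‖ ≤ L * ‖z - x‖) (hys : ∀ j, y j ∈ s) (hy : ∀ j, y j ≠ x) :
    f' x ∈ slopePolyhedron f L x y := by
  refine (mem_slopePolyhedron_iff hy).2 fun j ↦ ?_
  have hdual (z : E) (hz : z ∈ s) :
      ‖InnerProductSpace.toDual ℝ E (f' z) - InnerProductSpace.toDual ℝ E (f' x)‖ ≤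
        L * ‖z - x‖ := by
    rw [← map_sub, LinearIsometryEquiv.norm_map]
    exact hL z hz
  have htaylor := norm_image_sub_sub_le_of_norm_hasFDerivWithin_sub_le hs
    (fun z hz ↦ (hf z hz).hasFDerivWithinAt) hdual (hys j)
  rwa [InnerProductSpace.toDual_apply_apply, real_inner_comm, norm_sub_rev,
    Real.norm_eq_abs] at htaylor

theorem isBounded_slopePolyhedron (hy : ∀ j, y j ≠ x)
    (hspan : Submodule.span ℝ (Set.range fun j ↦ y j - x) = ⊤) :
    Bornology.IsBounded (slopePolyhedron f L x y) :=
  (isBounded_setOf_norm_inner_sub_le hspan (fun j ↦ f (y j) - f x)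
    fun j ↦ L / 2 * ‖y j - x‖ ^ 2).subset fun _ hz ↦ (mem_slopePolyhedron_iff hy).1 hz

theorem stmt10_general {f' : E → E} {s : Set E} (hs : StarConvex ℝ x s)
    (hf : ∀ z ∈ s, HasGradientWithinAt f (f' z) s z)
    (hL : ∀ z ∈ s, ‖f' z - f' x‖ ≤ L * ‖z - x‖) (hys : ∀ j, y j ∈ s) (hy : ∀ j, y j ≠ x)
    (hspan : Submodule.span ℝ (Set.range fun j ↦ y j - x) = ⊤) :
    f' x ∈ slopePolyhedron f L x y ∧ Bornology.IsBounded (slopePolyhedron f L x y) :=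
  ⟨hasGradientWithinAt_mem_slopePolyhedron hs hf hL hys hy, isBounded_slopePolyhedron hy hspan⟩

end SlopePolyhedron

/-- the gradient lies in the polyhedron determined by the
finite-difference slopes, and this polyhedron is bounded when the
displacement vectors span `ℝ^d` (Lemma 3 of the paper). -/
theorem stmt10 (d m : ℕ) (hd : 1 ≤ d)
    (f : EuclideanSpace ℝ (Fin d) → ℝ) (L : ℝ)
    (hf : ContDiff ℝ 1 f)
    (hLip : ∀ x y, ‖gradient f x - gradient f y‖ ≤ L * ‖x - y‖)
    (x : EuclideanSpace ℝ (Fin d)) (y : Fin m → EuclideanSpace ℝ (Fin d))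
    (hy : ∀ j, y j ≠ x)
    (hspan : Submodule.span ℝ (Set.range fun j => y j - x) = ⊤) :
    gradient f x ∈
      {z : EuclideanSpace ℝ (Fin d) | ∀ j,
        |⟪‖y j - x‖⁻¹ • (y j - x), z⟫ - (f (y j) - f x) / ‖y j - x‖| ≤
          (L/2) * ‖y j - x‖}
    ∧ Bornology.IsBounded
      {z : EuclideanSpace ℝ (Fin d) | ∀ j,
        |⟪‖y j - x‖⁻¹ • (y j - x), z⟫ - (f (y j) - f x) / ‖y j - x‖| ≤
          (L/2) * ‖y j - x‖} := by
  exact stmt10_general (starConvex_univ x)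
    (fun z _ ↦ hasGradientWithinAt_univ.2 (hf.differentiable one_ne_zero z).hasGradientAt)
    (fun z _ ↦ hLip z x) (fun _ ↦ Set.mem_univ _) hy hspan
end

section
/- Let d ≥ 1, m ≥ 1, let v₁, …, v_m ∈ ℝ^d be unit vectors, let s₁, …, s_m ∈ ℝ and a₁, …, a_m ≥ 0, and let P = { z ∈ ℝ^d : |v_jᵀz − s_j| ≤ a_j for all j }. Let g ∈ ℝ^d be any point such that w_j := |s_j − gᵀv_j| + a_j > 0 for every j, and let B ∈ ℝ^{m×d} be the matrix whose j-th row is v_jᵀ / (√m · w_j). Then every y ∈ P satisfies ‖B(y − g)‖ ≤ 1; that is, P is contained in the ellipsoid { z ∈ ℝ^d : ‖B(z − g)‖ ≤ 1 }. -/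
open scoped RealInnerProductSpace

/-!
By the triangle inequality through `sⱼ`, the slab `|vⱼᵀz - sⱼ| ≤ aⱼ` lies in the slab
`|vⱼᵀ(z - g)| ≤ wⱼ` centred at `g`. So on `P` every ratio `(vⱼᵀ(z - g) / wⱼ)²` is at most `1`,
and hence so is every convex combination of these ratios, in particular their mean
`‖B(z - g)‖²`.
-/

section RowScaling

variable {𝕜 E ι : Type*} [Field 𝕜] [LinearOrder 𝕜] [IsStrictOrderedRing 𝕜]
  [AddCommGroup E] [Module 𝕜 E]

theorem abs_map_sub_le_abs_sub_map_add {φ : Module.Dual 𝕜 E} {s a : 𝕜} {y : E} (g : E)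
    (hy : |φ y - s| ≤ a) : |φ (y - g)| ≤ |s - φ g| + a :=
  calc |φ (y - g)| = |φ y - φ g| := by rw [map_sub]
    _ ≤ |φ y - s| + |s - φ g| := abs_sub_le _ _ _
    _ ≤ |s - φ g| + a := by linarith

theorem sq_map_sub_div_sq_le_one {φ : Module.Dual 𝕜 E} {s a : 𝕜} {g y : E}
    (hw : 0 < |s - φ g| + a) (hy : |φ y - s| ≤ a) :
    φ (y - g) ^ 2 / (|s - φ g| + a) ^ 2 ≤ 1 := by
  rw [div_le_one (pow_pos hw 2), sq_le_sq, abs_of_pos hw]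
  exact abs_map_sub_le_abs_sub_map_add g hy

theorem stmt16_general [Fintype ι] {p : ι → 𝕜} (hp : p ∈ stdSimplex 𝕜 ι)
    (φ : ι → Module.Dual 𝕜 E) (s a : ι → 𝕜) (g : E) (hw : ∀ j, 0 < |s j - φ j g| + a j) :
    ∀ y ∈ {z : E | ∀ j, |φ j z - s j| ≤ a j},
      ∑ j, p j * (φ j (y - g) ^ 2 / (|s j - φ j g| + a j) ^ 2) ≤ 1 := fun _ hy =>
  (convex_Iic (1 : 𝕜)).sum_mem (fun j _ => hp.1 j) hp.2
    fun j _ => sq_map_sub_div_sq_le_one (hw j) (hy j)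

end RowScaling

/-- the 'row scaling' ellipsoidal bound: the slab polyhedron
`P = {z : |vⱼᵀz − sⱼ| ≤ aⱼ}` is contained in the ellipsoid
`{z : ‖B(z − g)‖ ≤ 1}`, where the `j`-th row of `B` is
`vⱼᵀ/(√m·wⱼ)` with `wⱼ = |sⱼ − gᵀvⱼ| + aⱼ`, so that
`‖B(z − g)‖² = (1/m)·Σⱼ ⟪vⱼ, z − g⟫²/wⱼ²`. -/
theorem stmt16 (d m : ℕ) (hd : 1 ≤ d) (hm : 1 ≤ m)
    (v : Fin m → EuclideanSpace ℝ (Fin d)) (hv : ∀ j, ‖v j‖ = 1)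
    (s a : Fin m → ℝ) (ha : ∀ j, 0 ≤ a j)
    (g : EuclideanSpace ℝ (Fin d))
    (hw : ∀ j, 0 < |s j - ⟪g, v j⟫| + a j) :
    ∀ y ∈ {z : EuclideanSpace ℝ (Fin d) | ∀ j, |⟪v j, z⟫ - s j| ≤ a j},
      (1/(m:ℝ)) * ∑ j, ⟪v j, y - g⟫^2 / (|s j - ⟪g, v j⟫| + a j)^2 ≤ 1 := by
  have : Nonempty (Fin m) := Fin.pos_iff_nonempty.mp hm
  simp only [real_inner_comm _ g] at hw ⊢
  simpa [Finset.mul_sum] using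
    stmt16_general stdSimplex.barycenter.2 (fun j => innerₛₗ ℝ (v j)) s a g hw
end
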